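/- (Kellogg-type example: momentum equation.) Let U ⊆ ℝ^d be open, B : U → ℝ^d be C³ with ΔB = 0 on U, and let ν > 0 be a real constant. Define u(x) := ∇(y ↦ ⟨y, B(y)⟩)(x) − 2B(x) and p(x) := ν·(∇·B)(x) on U. Then −∇·(ν ε(u)) + ∇p = 0 on U, where ε(u) := (∇u + (∇u)^T)/2 with ∇u the Jacobian matrix of u, and ∇·(ν ε(u)) denotes the vector field whose i-th component is the divergence of the i-th row of ν ε(u). -/

import Mathlib

/-!
Write `φ = x·B`, so that `u = ∇φ - 2B`. Symmetry of second derivatives gives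
`ε(u)_{ij} = ∂_j∂_i φ - ∂_j B_i - ∂_i B_j`, hence, commuting derivatives once more,
`(∇·ε(u))_i = ∂_i Δφ - ΔB_i - ∂_i (∇·B)`. The product rule gives
`Δφ = 2 ∇·B + x·ΔB = 2 ∇·B` (`lap_dot`), so for harmonic `B` the right-hand side is
`∂_i (∇·B)`, which is `∂_i p / ν`.

Identities are only available on the open set `U`; they are differentiated through `pd_congr`,
which says that `pd f x k` at `x ∈ U` depends only on `f` on `U`.
-/

noncomputable section

/-- Partial derivative of a scalar field in the `k`-th coordinate direction. -/
def pd {d : ℕ} (f : (Fin d → ℝ) → ℝ) (x : Fin d → ℝ) (k : Fin d) : ℝ :=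
  fderiv ℝ f x (Pi.single k 1)

/-- Laplacian `Δf = Σ_k ∂²f/∂x_k²` of a scalar field. -/
def lap {d : ℕ} (f : (Fin d → ℝ) → ℝ) (x : Fin d → ℝ) : ℝ :=
  ∑ k, pd (fun y => pd f y k) x k

/-- The Neuber-type velocity `u = ∇(x·B) − 2B`. -/
def neuber {d : ℕ} (B : (Fin d → ℝ) → Fin d → ℝ) (y : Fin d → ℝ) : Fin d → ℝ :=
  fun i => pd (fun z => ∑ k, z k * B z k) y i - 2 * B y i

/-- Symmetric gradient `ε(u)_{ij} = (∂_j u_i + ∂_i u_j)/2` of a vector field. -/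
def epsF {d : ℕ} (u : (Fin d → ℝ) → Fin d → ℝ) (y : Fin d → ℝ) :
    Fin d → Fin d → ℝ :=
  fun i j => (pd (fun z => u z i) y j + pd (fun z => u z j) y i) / 2

section Aux

variable {d : ℕ} {U : Set (Fin d → ℝ)} {f g : (Fin d → ℝ) → ℝ} {x : Fin d → ℝ}

theorem pd_congr (hU : IsOpen U) (h : ∀ y ∈ U, f y = g y) (hx : x ∈ U) (k : Fin d) :
    pd f x k = pd g x k := by
  have : f =ᶠ[nhds x] g := Filter.eventuallyEq_of_mem (hU.mem_nhds hx) h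
  unfold pd
  rw [this.fderiv_eq]

theorem pd_contDiffOn (hU : IsOpen U) {m n : WithTop ℕ∞} (hf : ContDiffOn ℝ n f U)
    (hmn : m + 1 ≤ n) (k : Fin d) : ContDiffOn ℝ m (fun y => pd f y k) U :=
  (hf.fderiv_of_isOpen hU hmn).clm_apply contDiffOn_const

theorem diffAt (hU : IsOpen U) {n : WithTop ℕ∞} (hf : ContDiffOn ℝ n f U)
    (hn : 1 ≤ n) (hx : x ∈ U) : DifferentiableAt ℝ f x :=
  ((hf.of_le hn).differentiableOn (by simp)).differentiableAt (hU.mem_nhds hx)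

theorem pd_add (hf : DifferentiableAt ℝ f x) (hg : DifferentiableAt ℝ g x) (k : Fin d) :
    pd (fun y => f y + g y) x k = pd f x k + pd g x k := by
  unfold pd
  rw [fderiv_fun_add hf hg]; rfl

theorem pd_sub (hf : DifferentiableAt ℝ f x) (hg : DifferentiableAt ℝ g x) (k : Fin d) :
    pd (fun y => f y - g y) x k = pd f x k - pd g x k := by
  unfold pd
  rw [fderiv_fun_sub hf hg]; rfl

theorem pd_const_mul (hf : DifferentiableAt ℝ f x) (c : ℝ) (k : Fin d) :
    pd (fun y => c * f y) x k = c * pd f x k := by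
  unfold pd
  rw [fderiv_const_mul hf c]; rfl

theorem pd_sum {F : Fin d → (Fin d → ℝ) → ℝ} (hF : ∀ j, DifferentiableAt ℝ (F j) x)
    (k : Fin d) : pd (fun y => ∑ j, F j y) x k = ∑ j, pd (F j) x k := by
  unfold pd
  rw [fderiv_fun_sum (fun j _ => hF j)]
  simp

/-- Product rule for the dot product with the position vector:
`∂_j (x·F) = F_j + x·∂_j F`. -/
theorem pd_dot {F : Fin d → (Fin d → ℝ) → ℝ} (hF : ∀ j, DifferentiableAt ℝ (F j) x)
    (j : Fin d) :
    pd (fun y => ∑ k, y k * F k y) x j = F j x + ∑ k, x k * pd (F k) x j := by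
  have hc : ∀ k : Fin d, HasFDerivAt (fun y : Fin d → ℝ => y k)
      (ContinuousLinearMap.proj (R := ℝ) (φ := fun _ : Fin d => ℝ) k) x :=
    fun k => (ContinuousLinearMap.proj (R := ℝ) (φ := fun _ : Fin d => ℝ) k).hasFDerivAt
  rw [pd_sum (fun k => (hc k).differentiableAt.fun_mul (hF k))]
  have : ∀ k, pd (fun y => y k * F k y) x j
      = x k * pd (F k) x j + F k x * (Pi.single j (1 : ℝ) : Fin d → ℝ) k := by
    intro k
    unfold pd
    rw [((hc k).fun_mul (hF k).hasFDerivAt).fderiv]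
    simp
  simp only [this, Finset.sum_add_distrib, Pi.single_apply]
  simp [add_comm]

/-- Symmetry of second partial derivatives of a `C²` function. -/
theorem pd_comm (hU : IsOpen U) (hf : ContDiffOn ℝ 2 f U) (hx : x ∈ U) (i j : Fin d) :
    pd (fun y => pd f y i) x j = pd (fun y => pd f y j) x i := by
  have hs : IsSymmSndFDerivAt ℝ f x :=
    (hf.contDiffAt (hU.mem_nhds hx)).isSymmSndFDerivAt (by simp)
  have hd : DifferentiableAt ℝ (fderiv ℝ f) x :=
    ((hf.fderiv_of_isOpen hU (m := 1) (by norm_num)).differentiableOn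
      (by simp)).differentiableAt (hU.mem_nhds hx)
  have key : ∀ a b : Fin d, pd (fun y => pd f y a) x b
      = fderiv ℝ (fderiv ℝ f) x (Pi.single b 1) (Pi.single a 1) := by
    intro a b
    unfold pd
    rw [fderiv_clm_apply hd (differentiableAt_const _)]
    simp
  rw [key, key, hs.eq]

/-- `Δ(x·B) = 2 ∇·B` for harmonic `B`. -/
theorem lap_dot (hU : IsOpen U) {B : (Fin d → ℝ) → Fin d → ℝ}
    (hB : ∀ k, ContDiffOn ℝ 3 (fun y => B y k) U)
    (hharm : ∀ x ∈ U, ∀ i, lap (fun y => B y i) x = 0) (hx : x ∈ U) :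
    lap (fun z => ∑ k, z k * B z k) x = 2 * ∑ k, pd (fun z => B z k) x k := by
  have hD : ∀ k j, ContDiffOn ℝ 2 (fun y => pd (fun z => B z k) y j) U :=
    fun k j => pd_contDiffOn hU (hB k) (by norm_num) j
  have h1 : ∀ j, pd (fun y => pd (fun z => ∑ k, z k * B z k) y j) x j
      = 2 * pd (fun z => B z j) x j
        + ∑ k, x k * pd (fun y => pd (fun z => B z k) y j) x j := by
    intro j
    have e : ∀ y ∈ U, pd (fun z => ∑ k, z k * B z k) y j
        = B y j + ∑ k, y k * pd (fun z => B z k) y j := fun y hy =>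
      pd_dot (F := fun k z => B z k) (fun k => diffAt hU (hB k) (by norm_num) hy) j
    have hDx : ∀ k, DifferentiableAt ℝ (fun y => pd (fun z => B z k) y j) x :=
      fun k => diffAt hU (hD k j) (by norm_num) hx
    rw [pd_congr hU e hx, pd_add (diffAt hU (hB j) (by norm_num) hx)
      (by fun_prop), pd_dot (F := fun k y => pd (fun z => B z k) y j) hDx]
    ring
  unfold lap at hharm ⊢
  simp only [h1, Finset.sum_add_distrib, ← Finset.mul_sum]
  rw [Finset.sum_comm]
  simp [← Finset.mul_sum, hharm x hx]

end Aux

/-- Kellogg-type example: momentum equation: if `B` is `C³`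
and componentwise harmonic on an open set `U`, `ν > 0` is constant,
`u = ∇(x·B) − 2B` and `p = ν ∇·B`, then `−∇·(ν ε(u)) + ∇p = 0` on `U`. -/
theorem stmt_18 (d : ℕ) (U : Set (Fin d → ℝ)) (hU : IsOpen U)
    (B : (Fin d → ℝ) → Fin d → ℝ) (hB : ContDiffOn ℝ 3 B U)
    (hharm : ∀ x ∈ U, ∀ i, lap (fun y => B y i) x = 0)
    (ν : ℝ) (hν : 0 < ν) :
    ∀ x ∈ U, ∀ i,
      -(∑ j, pd (fun y => ν * epsF (neuber B) y i j) x j) +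
        pd (fun y => ν * ∑ k, pd (fun z => B z k) y k) x i = 0 := by
  intro x hx i
  have hBk : ∀ k, ContDiffOn ℝ 3 (fun y => B y k) U := contDiffOn_pi.1 hB
  set φ : (Fin d → ℝ) → ℝ := fun z => ∑ k, z k * B z k with hφ
  have hφ3 : ContDiffOn ℝ 3 φ U :=
    ContDiffOn.sum fun k _ => (contDiff_apply ℝ ℝ k).contDiffOn.mul (hBk k)
  have hφ2 : ∀ a, ContDiffOn ℝ 2 (fun y => pd φ y a) U :=
    fun a => pd_contDiffOn hU hφ3 (by norm_num) a
  have hφ1 : ∀ a b, ContDiffOn ℝ 1 (fun z => pd (fun y => pd φ y a) z b) U :=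
    fun a b => pd_contDiffOn hU (hφ2 a) (by norm_num) b
  have hB2 : ∀ k a, ContDiffOn ℝ 2 (fun y => pd (fun z => B z k) y a) U :=
    fun k a => pd_contDiffOn hU (hBk k) (by norm_num) a
  have hu : ∀ y ∈ U, ∀ a b, pd (fun z => neuber B z a) y b
      = pd (fun z => pd φ z a) y b - 2 * pd (fun z => B z a) y b := by
    intro y hy a b
    have hBa := diffAt hU (hBk a) (by norm_num) hy
    rw [← pd_const_mul hBa, ← pd_sub (diffAt hU (hφ2 a) (by norm_num) hy)
      (hBa.const_mul 2)]
    rfl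
  have heps : ∀ j, ∀ y ∈ U, ν * epsF (neuber B) y i j
      = ν * (pd (fun z => pd φ z i) y j
        - (pd (fun z => B z i) y j + pd (fun z => B z j) y i)) := by
    intro j y hy
    unfold epsF
    rw [hu y hy, hu y hy, pd_comm hU (hφ3.of_le (by norm_num)) hy j i]
    ring
  have hterm : ∀ j, pd (fun y => ν * epsF (neuber B) y i j) x j
      = ν * (pd (fun y => pd (fun z => pd φ z j) y j) x i
        - (pd (fun y => pd (fun z => B z i) y j) x j
          + pd (fun y => pd (fun z => B z j) y j) x i)) := by
    intro j
    have d1 := diffAt hU (hφ1 i j) le_rfl hx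
    have d2 := diffAt hU (hB2 i j) (by norm_num) hx
    have d3 := diffAt hU (hB2 j i) (by norm_num) hx
    rw [pd_congr hU (heps j) hx, pd_const_mul (d1.fun_sub (d2.fun_add d3)),
      pd_sub d1 (d2.fun_add d3), pd_add d2 d3,
      pd_comm hU ((hBk j).of_le (by norm_num)) hx i j,
      pd_congr hU (fun y hy => pd_comm hU (hφ3.of_le (by norm_num)) hy i j) hx,
      pd_comm hU (hφ2 j) hx i j]
  have hdiv : ∀ k, DifferentiableAt ℝ (fun y => pd (fun z => B z k) y k) x :=
    fun k => diffAt hU (hB2 k k) (by norm_num) hx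
  have hdivs : DifferentiableAt ℝ (fun y => ∑ k, pd (fun z => B z k) y k) x := by
    fun_prop
  have hlap : ∑ j, pd (fun y => pd (fun z => pd φ z j) y j) x i
      = 2 * ∑ j, pd (fun y => pd (fun z => B z j) y j) x i := by
    rw [← pd_sum (fun j => diffAt hU (hφ1 j j) le_rfl hx), ← pd_sum hdiv,
      ← pd_const_mul hdivs]
    exact pd_congr hU (fun y hy => lap_dot hU hBk hharm hy) hx i
  have hh := hharm x hx i
  unfold lap at hh
  simp only [hterm]
  rw [pd_const_mul hdivs, pd_sum hdiv, ← Finset.mul_sum, Finset.sum_sub_distrib,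
    Finset.sum_add_distrib, hlap, hh]
  ring
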